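/- Let m ∈ ℂ and let k ∈ ℂ with Re(k) > 0. Then the function u(r) := 𝓘_m(k r) on ]0,∞[ is twice differentiable and satisfies the Bessel eigenvalue equation −u''(r) + (m² − 1/4)·r^{−2}·u(r) + k²·u(r) = 0 for all r > 0; i.e., 𝓘_m(k·) is an eigenfunction of the Bessel operator −∂_r² + (m² − 1/4)/r² with eigenvalue −k². -/

import Mathlib

open Complex

/-- Olver-normalized hypergeometric function `₀𝐅₁(c; w) = ∑ wⁿ/(n! Γ(c+n))`. -/
noncomputable def zeroF1reg (c w : ℂ) : ℂ :=
  ∑' n : ℕ, w ^ n / ((n.factorial : ℂ) * Complex.Gamma (c + n))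

/-- Hyperbolic 1d Bessel function `𝓘_m(z) = √π (z/2)^{1/2+m} ₀𝐅₁(m+1; z²/4)`
(principal branch powers). -/
noncomputable def besselI1d (m z : ℂ) : ℂ :=
  (Real.sqrt Real.pi : ℂ) * (z / 2) ^ ((1 : ℂ) / 2 + m) * zeroF1reg (m + 1) (z ^ 2 / 4)

lemma rgamma_step (s : ℂ) : (Complex.Gamma s)⁻¹ = s * (Complex.Gamma (s + 1))⁻¹ :=
  Complex.one_div_Gamma_eq_self_mul_one_div_Gamma_add_one s

lemma rgamma_bdd (c : ℂ) : ∃ C : ℝ, 0 ≤ C ∧ ∀ n : ℕ, ‖(Complex.Gamma (c + n))⁻¹‖ ≤ C := by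
  obtain ⟨N, hN⟩ := exists_nat_ge (‖c‖ + 1)
  have h1 : ∀ n : ℕ, ‖(Complex.Gamma (c + (N + n : ℕ)))⁻¹‖ ≤ ‖(Complex.Gamma (c + N))⁻¹‖ := by
    intro n
    induction n with
    | zero => simp
    | succ n ih =>
      refine le_trans ?_ ih
      have h := rgamma_step (c + (N + n : ℕ))
      have h2 : c + (N + n : ℕ) + 1 = c + (N + (n + 1) : ℕ) := by push_cast; ring
      rw [h2] at h
      rw [h, norm_mul]
      have h3 : 1 ≤ ‖c + (N + n : ℕ)‖ := by
        have := norm_sub_le (c + (N + n : ℕ)) c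
        rw [add_sub_cancel_left, Complex.norm_natCast] at this
        push_cast at this ⊢
        have : (0:ℝ) ≤ n := Nat.cast_nonneg n
        linarith
      exact le_mul_of_one_le_left (norm_nonneg _) h3
  refine ⟨∑ i ∈ Finset.range (N + 1), ‖(Complex.Gamma (c + i))⁻¹‖,
    Finset.sum_nonneg fun _ _ => norm_nonneg _, fun n => ?_⟩
  have key : ∀ j : ℕ, j ≤ N → ‖(Complex.Gamma (c + j))⁻¹‖ ≤
      ∑ i ∈ Finset.range (N + 1), ‖(Complex.Gamma (c + i))⁻¹‖ := fun j hj =>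
    Finset.single_le_sum (f := fun i : ℕ => ‖(Complex.Gamma (c + i))⁻¹‖)
      (fun _ _ => norm_nonneg _) (Finset.mem_range.2 (by omega))
  rcases le_total n N with h | h
  · exact key n h
  · obtain ⟨j, rfl⟩ := Nat.exists_eq_add_of_le h
    exact (h1 j).trans (key N le_rfl)

lemma zeroF1_summable (c w : ℂ) :
    Summable fun n : ℕ => w ^ n / ((n.factorial : ℂ) * Complex.Gamma (c + n)) := by
  obtain ⟨C, hC, h⟩ := rgamma_bdd c
  refine Summable.of_norm_bounded ((Real.summable_pow_div_factorial ‖w‖).mul_left C) fun n => ?_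
  rw [div_eq_mul_inv, mul_inv, norm_mul, norm_mul, norm_pow, norm_inv, Complex.norm_natCast]
  have := h n
  calc ‖w‖ ^ n * ((n.factorial : ℝ)⁻¹ * ‖(Complex.Gamma (c + n))⁻¹‖)
      ≤ ‖w‖ ^ n * ((n.factorial : ℝ)⁻¹ * C) := by gcongr
    _ = _ := by ring

lemma zeroF1_hasDerivAt (c w : ℂ) :
    HasDerivAt (zeroF1reg c) (zeroF1reg (c + 1) w) w := by
  obtain ⟨C, hC, h⟩ := rgamma_bdd c
  set R : ℝ := ‖w‖ + 1 with hR
  have hRpos : 0 < R := by positivity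
  let g' : ℕ → ℂ → ℂ := fun n y =>
    (n * y ^ (n - 1)) / ((n.factorial : ℂ) * Complex.Gamma (c + n))
  have hsucc : ∀ n y, g' (n + 1) y = y ^ n / ((n.factorial : ℂ) * Complex.Gamma (c + 1 + n)) := by
    intro n y
    have e : c + ((n + 1 : ℕ) : ℂ) = c + 1 + n := by push_cast; ring
    simp only [g', e, Nat.add_sub_cancel, Nat.factorial_succ]
    have : ((n + 1 : ℕ) : ℂ) ≠ 0 := Nat.cast_ne_zero.2 (Nat.succ_ne_zero n)
    rw [Nat.cast_mul, mul_assoc, mul_div_mul_left _ _ this]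
  have hu : Summable fun n : ℕ => C * ((n : ℝ) * R ^ (n - 1) / n.factorial) := by
    apply Summable.mul_left
    rw [← summable_nat_add_iff 1]
    refine (Real.summable_pow_div_factorial R).congr fun n => ?_
    simp only [Nat.add_sub_cancel, Nat.factorial_succ]
    push_cast
    have : (n : ℝ) + 1 ≠ 0 := by positivity
    rw [mul_div_mul_left _ _ this]
  have hw : w ∈ Metric.ball (0 : ℂ) R := by simp [hR]
  have := hasDerivAt_tsum_of_isPreconnected (𝕜 := ℂ)
    (g := fun (n : ℕ) y => y ^ n / ((n.factorial : ℂ) * Complex.Gamma (c + n))) (g' := g')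
    hu Metric.isOpen_ball (convex_ball (0 : ℂ) R).isPreconnected
    (fun n y _ => (hasDerivAt_pow n y).div_const _)
    (fun n y hy => by
      have hy : ‖y‖ ≤ R := by simpa using (mem_ball_zero_iff.1 hy).le
      have := h n
      simp only [g']
      rw [div_eq_mul_inv, mul_inv, norm_mul, norm_mul, norm_mul, norm_pow, norm_inv,
        Complex.norm_natCast, Complex.norm_natCast]
      calc (n : ℝ) * ‖y‖ ^ (n - 1) * ((n.factorial : ℝ)⁻¹ * ‖(Complex.Gamma (c + n))⁻¹‖)
          ≤ n * R ^ (n - 1) * ((n.factorial : ℝ)⁻¹ * C) := by gcongr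
        _ = _ := by ring)
    hw (zeroF1_summable c w) hw
  have hval : ∑' n, g' n w = zeroF1reg (c + 1) w := by
    have hs : Summable fun n => g' n w := by
      rw [← summable_nat_add_iff 1]
      exact (zeroF1_summable (c + 1) w).congr fun n => (hsucc n w).symm
    rw [hs.tsum_eq_zero_add]
    simp only [hsucc]
    simp [g', zeroF1reg]
  rw [hval] at this
  exact this

lemma zeroF1_contig (c w : ℂ) :
    zeroF1reg c w = c * zeroF1reg (c + 1) w + w * zeroF1reg (c + 2) w := by
  have h1 := zeroF1_summable (c + 1) w
  have h2 := zeroF1_summable (c + 2) w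
  let b : ℕ → ℂ := fun n => n * (w ^ n / ((n.factorial : ℂ) * Complex.Gamma (c + 1 + n)))
  have hsucc : ∀ n, b (n + 1) =
      w * (w ^ n / ((n.factorial : ℂ) * Complex.Gamma (c + 2 + n))) := by
    intro n
    have e : c + 1 + ((n + 1 : ℕ) : ℂ) = c + 2 + n := by push_cast; ring
    simp only [b, e, Nat.factorial_succ]
    have : ((n + 1 : ℕ) : ℂ) ≠ 0 := Nat.cast_ne_zero.2 (Nat.succ_ne_zero n)
    rw [Nat.cast_mul, mul_assoc, ← mul_div_assoc, mul_div_mul_left _ _ this, pow_succ]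
    ring
  have hb : Summable b := by
    rw [← summable_nat_add_iff 1]
    exact (h2.mul_left w).congr fun n => (hsucc n).symm
  have hbs : ∑' n, b n = w * zeroF1reg (c + 2) w := by
    rw [hb.tsum_eq_zero_add]
    simp only [hsucc, tsum_mul_left]
    simp [b, zeroF1reg]
  rw [← hbs]
  unfold zeroF1reg
  rw [← tsum_mul_left, ← (h1.mul_left c).tsum_add hb]
  refine tsum_congr fun n => ?_
  have h := rgamma_step (c + n)
  have e : c + (n : ℂ) + 1 = c + 1 + n := by ring
  rw [e] at h
  simp only [b, div_eq_mul_inv, mul_inv]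
  rw [h]
  ring

theorem besselI1d_is_bessel_eigenfunction (m k : ℂ) (hk : 0 < k.re) :
    ∀ r : ℝ, 0 < r →
      (DifferentiableAt ℝ (fun r : ℝ => besselI1d m (k * r)) r ∧
        DifferentiableAt ℝ (deriv fun r : ℝ => besselI1d m (k * r)) r) ∧
      -deriv (deriv fun r : ℝ => besselI1d m (k * r)) r +
          (m ^ 2 - 1 / 4) / (r : ℂ) ^ 2 * besselI1d m (k * r) +
          k ^ 2 * besselI1d m (k * r) = 0 := by
  have hk0 : k ≠ 0 := by rintro rfl; simp at hk
  let S : ℂ := (Real.sqrt Real.pi : ℂ)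
  let a : ℂ := (1 : ℂ) / 2 + m
  let P : ℝ → ℂ := fun r => (k * r / 2) ^ a
  let F : ℂ → ℝ → ℂ := fun c r => zeroF1reg c ((k * r) ^ 2 / 4)
  have hlin : ∀ r : ℝ, HasDerivAt (fun r : ℝ => k * (r : ℂ)) k r := fun r => by
    simpa using (Complex.ofRealCLM.hasDerivAt (x := r)).const_mul k
  have hP : ∀ r : ℝ, 0 < r → HasDerivAt P (a / r * P r) r := by
    intro r hr
    have hr0 : (r : ℂ) ≠ 0 := by exact_mod_cast hr.ne'
    have hs : k * r / 2 ∈ Complex.slitPlane := by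
      left
      have : k * r / 2 = ((r / 2 : ℝ) : ℂ) * k := by push_cast; ring
      rw [this, Complex.re_ofReal_mul]
      positivity
    have h0 : k * r / 2 ≠ 0 := Complex.slitPlane_ne_zero hs
    have := (Complex.hasStrictDerivAt_cpow_const (c := a) hs).hasDerivAt.comp r ((hlin r).div_const 2)
    refine this.congr_deriv ?_
    simp only [P]
    rw [Complex.cpow_sub _ _ h0, Complex.cpow_one]
    field_simp
  have hF : ∀ c (r : ℝ), HasDerivAt (F c) (k ^ 2 * r / 2 * F (c + 1) r) r := by
    intro c r
    have := (zeroF1_hasDerivAt c ((k * r) ^ 2 / 4)).comp r (((hlin r).pow 2).div_const 4)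
    refine this.congr_deriv ?_
    simp only [F]
    push_cast
    ring
  have hu : (fun r : ℝ => besselI1d m (k * r)) = fun r => S * P r * F (m + 1) r := rfl
  let u1 : ℝ → ℂ := fun r =>
    S * P r * (a / r * F (m + 1) r + k ^ 2 * r / 2 * F (m + 1 + 1) r)
  have hd1 : ∀ r : ℝ, 0 < r → HasDerivAt (fun r : ℝ => besselI1d m (k * r)) (u1 r) r := by
    intro r hr
    rw [hu]
    refine (((hP r hr).const_mul S).mul (hF (m + 1) r)).congr_deriv ?_
    simp only [u1]
    ring
  have hd2 : ∀ r : ℝ, 0 < r → HasDerivAt u1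
      ((m ^ 2 - 1 / 4) / (r : ℂ) ^ 2 * besselI1d m (k * r) + k ^ 2 * besselI1d m (k * r)) r := by
    intro r hr
    have hr0 : (r : ℂ) ≠ 0 := by exact_mod_cast hr.ne'
    have hid : HasDerivAt (fun r : ℝ => (r : ℂ)) 1 r := Complex.ofRealCLM.hasDerivAt
    have hA := (((hasDerivAt_const r a).div hid hr0).mul (hF (m + 1) r)).add
      (((hid.const_mul (k ^ 2)).div_const 2).mul (hF (m + 1 + 1) r))
    refine (((hP r hr).const_mul S).mul hA).congr_deriv ?_
    have hc := zeroF1_contig (m + 1) ((k * r) ^ 2 / 4)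
    have e : m + 1 + 2 = m + 1 + 1 + 1 := by ring
    rw [e] at hc
    have hb : besselI1d m (k * r) = S * P r * F (m + 1) r := rfl
    rw [hb]
    change F (m + 1) r = (m + 1) * F (m + 1 + 1) r +
      (k * r) ^ 2 / 4 * F (m + 1 + 1 + 1) r at hc
    simp only [Pi.add_apply, Pi.mul_apply, Pi.div_apply]
    generalize F (m + 1 + 1 + 1) r = F3 at *
    generalize F (m + 1 + 1) r = F2 at *
    generalize F (m + 1) r = F1 at *
    generalize P r = p at *
    have ha : a = 1 / 2 + m := rfl
    rw [ha]
    field_simp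
    linear_combination (-(16 : ℂ)) * S * p * (r : ℂ) ^ 2 * k ^ 2 * hc
  intro r hr
  have hev : (deriv fun r : ℝ => besselI1d m (k * r)) =ᶠ[nhds r] u1 := by
    filter_upwards [lt_mem_nhds hr] with x hx using (hd1 x hx).deriv
  have h2 := (hd2 r hr).congr_of_eventuallyEq hev
  refine ⟨⟨(hd1 r hr).differentiableAt, h2.differentiableAt⟩, ?_⟩
  rw [h2.deriv]
  ring
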